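/- arXiv:1607.04728 — 2 statements merged into one kernel-verified Lean document; each statement's English description precedes it below -/
import Mathlib

section
/- For every integer k ≥ 1 there exists a one-sided infinite word x over a finite alphabet such that p_x(n) = Ω(n^{k−1}), d_0(x) = k (in particular Fac(x) is contained in a product of k languages each of bounded complexity, but in no product of fewer than k languages of bounded complexity), and hence x has cost c(x) = 0 and cost dimension k. -/
open scoped ENNReal Pointwise

universe u

variable {A : Type u}

/-- The factor of `x` of length `n` starting at position `i`. -/
def wordSeg (x : ℕ → A) (i n : ℕ) : List A := (List.range n).map fun j => x (i + j)

/-- The set of finite factors of a one-sided infinite word (including the empty word). -/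
def Fac (x : ℕ → A) : Set (List A) := {u | ∃ i n, u = wordSeg x i n}

/-- The factor of a two-sided word `x` of length `n` starting at position `i`. -/
def wordSegZ (x : ℤ → A) (i : ℤ) (n : ℕ) : List A := (List.range n).map fun j => x (i + j)

/-- The set of finite factors of a two-sided infinite word (including the empty word). -/
def FacZ (x : ℤ → A) : Set (List A) := {u | ∃ (i : ℤ) (n : ℕ), u = wordSegZ x i n}

/-- The complexity of a language: the number of words of length `n` in it. -/
noncomputable def complexity (L : Set (List A)) (n : ℕ) : ℕ :=
  {u ∈ L | u.length = n}.ncard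

/-- The accumulative complexity `p*_L(n) = Σ_{i=0}^{n} p_L(i)`. -/
noncomputable def accComplexity (L : Set (List A)) (n : ℕ) : ℕ :=
  ∑ i ∈ Finset.range (n + 1), complexity L i

/-- Concatenation (product) of two languages. -/
def prodL (S T : Set (List A)) : Set (List A) := {w | ∃ s ∈ S, ∃ t ∈ T, w = s ++ t}

/-- `powL S k` = `S^k`, the set of concatenations of `k` elements of `S`. -/
def powL (S : Set (List A)) : ℕ → Set (List A)
  | 0 => {([] : List A)}
  | k + 1 => prodL (powL S k) S

/-- `f(n) = O(n^α)`. -/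
def PolyBound (f : ℕ → ℕ) (α : ℝ) : Prop :=
  ∃ C : ℝ, ∀ n : ℕ, 1 ≤ n → (f n : ℝ) ≤ C * (n : ℝ) ^ α

/-- The `α`-dimension `d_α(L)`: infimum of the integers `k ≥ 1` such that `L ⊆ S^k`
for some language `S` with `p_S(n) = O(n^α)`, with `inf ∅ = ⊤`. -/
noncomputable def polyDim (α : ℝ) (L : Set (List A)) : ℕ∞ :=
  sInf {k : ℕ∞ | ∃ m : ℕ, k = m ∧ 1 ≤ m ∧
    ∃ S : Set (List A), PolyBound (complexity S) α ∧ L ⊆ powL S m}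

/-- The accumulative `α`-dimension `d*_α(L)`. -/
noncomputable def polyDimStar (α : ℝ) (L : Set (List A)) : ℕ∞ :=
  sInf {k : ℕ∞ | ∃ m : ℕ, k = m ∧ 1 ≤ m ∧
    ∃ S : Set (List A), PolyBound (accComplexity S) α ∧ L ⊆ powL S m}

/-- The cost `c(L)`: infimum of the `α ≥ 0` with `d_α(L) < +∞`, with `inf ∅ = ⊤`. -/
noncomputable def cost (L : Set (List A)) : ℝ≥0∞ :=
  sInf {a : ℝ≥0∞ | ∃ α : ℝ, 0 ≤ α ∧ a = ENNReal.ofReal α ∧ polyDim α L ≠ ⊤}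

/-- A one-sided word is ultimately periodic if it is of the form `u v v v ⋯`. -/
def UltimatelyPeriodic (x : ℕ → A) : Prop :=
  ∃ N p : ℕ, 0 < p ∧ ∀ n : ℕ, N ≤ n → x (n + p) = x n

/-- A two-sided word is eventually periodic if it is periodic far enough to the right
and far enough to the left. -/
def EventuallyPeriodicZ (x : ℤ → A) : Prop :=
  (∃ p : ℕ, 0 < p ∧ ∃ N : ℤ, ∀ n : ℤ, N ≤ n → x (n + p) = x n) ∧
  (∃ p : ℕ, 0 < p ∧ ∃ N : ℤ, ∀ n : ℤ, n ≤ N → x (n - p) = x n)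

/-- A one-sided word is recurrent if each of its factors occurs infinitely often. -/
def Recurrent (x : ℕ → A) : Prop :=
  ∀ u ∈ Fac x, ∀ N : ℕ, ∃ i : ℕ, N ≤ i ∧ u = wordSeg x i u.length

/-- `u` is a right special factor for the language `F`. -/
def RightSpecial (F : Set (List A)) (u : List A) : Prop :=
  u ∈ F ∧ ∃ a b : A, a ≠ b ∧ u ++ [a] ∈ F ∧ u ++ [b] ∈ F

/-- `M` is a `D`-marker set for a word with factor set `F`: every factor of length
at least `D n` contains a factor of length `n` belonging to `M`. -/
def MarkerSet (D : ℕ) (M F : Set (List A)) : Prop :=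
  ∀ n : ℕ, 1 ≤ n → ∀ u ∈ F, D * n ≤ u.length →
    ∃ v ∈ M, v.length = n ∧ v <:+: u

/-- A language is factorial if it contains all factors of its members. -/
def IsFactorial (S : Set (List A)) : Prop := ∀ u ∈ S, ∀ v : List A, v <:+: u → v ∈ S

/-- The bound `Σ_{k ∈ I_n ∩ ℕ} p_M(2^k)(1 + 4 p(3n)/2^k)` where
`I_n = (log₂(n/(2D)), log₂(2n)]`, i.e. the sum is over natural `k` with
`n/(2D) < 2^k ≤ 2n`. -/
noncomputable def markerBound (M F : Set (List A)) (D n : ℕ) : ℝ :=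
  ∑ k ∈ (Finset.range (2 * n + 2)).filter (fun k => n < 2 * D * 2 ^ k ∧ 2 ^ k ≤ 2 * n),
    (complexity M (2 ^ k) : ℝ) * (1 + 4 * (complexity F (3 * n) : ℝ) / 2 ^ k)

-- The word `u = ∏_{i=1}^{∞} a b^i = a b a b b a b b b ⋯` over `{a,b}`, with
-- `a = false`, `b = true`: position `n` carries an `a` iff `n = (i-1)(i+2)/2` for some
-- `i ≥ 1`, i.e. iff `2n = m(m+3)` for some `m ≥ 0`.
open Classical in
noncomputable def uWord (n : ℕ) : Bool :=
  if ∃ m : ℕ, 2 * n = m * (m + 3) then false else true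

/-!
If `L ⊆ S^m` with `S` of bounded complexity, then `p_L(n) = O(n^(m-1))`, since a word of length `n`
can be cut into `m` pieces in `O(n^(m-1))` ways. Growth `Ω(n^(k-1))` therefore forces
`d₀(L) ≥ k`.

For `h = k - 1 ≥ 1`, let `x` be a word in which clusters of `h` ones are placed ever further apart,
each of the countably many shapes of such a cluster occurring infinitely often. A window of length
`n` around a late cluster can show any `h`-subset of its positions, so `p_x(n) ≥ C(n, h)`.
Conversely, let a block be a cluster of `x` with the gap that follows it. A factor inside one block
is cut at its ones into `0 ⋯ 0` and at most `h` pieces `1 0 ⋯ 0`. Any other factor is cut at the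
start of the last block it meets. What follows gives at most `h` pieces `1 0 ⋯ 0`; what
precedes is determined by its length, because every gap is longer than all that precedes its block:
either that part fits into the gap and is `0 ⋯ 0`, or its length tells at which block it ends. So
`h + 1 = k` pieces from a language of complexity at most `3` suffice. For `h = 0` a constant word
does.
-/

open Filter Asymptotics
open Finset.HasAntidiagonal (antidiagonal mem_antidiagonal)

section Complexity

lemma finite_length_eq [Finite A] (L : Set (List A)) (n : ℕ) : {u ∈ L | u.length = n}.Finite :=
  (List.finite_length_eq A n).subset fun _ hu ↦ hu.2

lemma complexity_mono [Finite A] {L L' : Set (List A)} (h : L ⊆ L') (n : ℕ) :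
    complexity L n ≤ complexity L' n :=
  Set.ncard_le_ncard (fun _ hu ↦ ⟨h hu.1, hu.2⟩) (finite_length_eq L' n)

lemma complexity_union_le (L L' : Set (List A)) (n : ℕ) :
    complexity (L ∪ L') n ≤ complexity L n + complexity L' n :=
  (congrArg Set.ncard Set.sep_union).trans_le (Set.ncard_union_le _ _)

lemma complexity_le_one_of_injOn_length {L : Set (List A)} (hL : L.InjOn List.length) (n : ℕ) :
    complexity L n ≤ 1 :=
  have hsub : {u ∈ L | u.length = n}.Subsingleton :=
    fun _ hu _ hv ↦ hL hu.1 hv.1 (hu.2.trans hv.2.symm)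
  (Set.ncard_le_one hsub.finite).2 hsub

lemma complexity_prodL_le [Finite A] (S T : Set (List A)) (n : ℕ) :
    complexity (prodL S T) n ≤
      ∑ p ∈ antidiagonal n, complexity S p.1 * complexity T p.2 := by
  let level (L : Set (List A)) (m : ℕ) : Set (List A) := {u ∈ L | u.length = m}
  have hsub : level (prodL S T) n ⊆ ⋃ p ∈ antidiagonal n,
      (fun q : List A × List A ↦ q.1 ++ q.2) '' level S p.1 ×ˢ level T p.2 := by
    rintro _ ⟨⟨s, hs, t, ht, rfl⟩, hn⟩
    have hst : (s.length, t.length) ∈ antidiagonal n :=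
      mem_antidiagonal.2 (List.length_append.symm.trans hn)
    exact Set.mem_biUnion hst ⟨(s, t), ⟨⟨hs, rfl⟩, ⟨ht, rfl⟩⟩, rfl⟩
  have hfin (p : ℕ × ℕ) : (level S p.1 ×ˢ level T p.2).Finite :=
    (finite_length_eq S p.1).prod (finite_length_eq T p.2)
  calc complexity (prodL S T) n
      ≤ _ := Set.ncard_le_ncard hsub (Set.Finite.biUnion (Finset.finite_toSet _)
        fun p _ ↦ (hfin p).image _)
    _ ≤ _ := Finset.set_ncard_biUnion_le _ _
    _ ≤ _ := Finset.sum_le_sum fun p _ ↦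
        (Set.ncard_image_le (hfin p)).trans_eq Set.ncard_prod

end Complexity

section Powers

lemma powL_one (S : Set (List A)) : powL S 1 = S := by
  ext w
  simp [powL, prodL]

lemma append_mem_powL_succ {S : Set (List A)} {s w : List A} {k : ℕ} (hs : s ∈ S)
    (hw : w ∈ powL S k) : s ++ w ∈ powL S (k + 1) := by
  induction k generalizing w with
  | zero =>
    obtain rfl : w = [] := hw
    rwa [List.append_nil, powL_one]
  | succ k ih =>
    obtain ⟨v, hv, t, ht, rfl⟩ := hw
    exact ⟨s ++ v, ih hv, t, ht, (List.append_assoc s v t).symm⟩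

lemma powL_subset_powL {S : Set (List A)} (hS : [] ∈ S) {k l : ℕ} (h : k ≤ l) :
    powL S k ⊆ powL S l := by
  refine monotone_nat_of_le_succ (fun m w hw ↦ ?_) h
  exact ⟨w, hw, [], hS, w.append_nil.symm⟩

lemma complexity_powL_succ_le [Finite A] {S : Set (List A)} {D : ℕ}
    (hS : ∀ n, complexity S n ≤ D) (m n : ℕ) :
    complexity (powL S (m + 1)) n ≤ D ^ (m + 1) * (n + 1) ^ m := by
  induction m generalizing n with
  | zero => simpa [powL_one] using hS n
  | succ m ih =>
    calc complexity (powL S (m + 1 + 1)) n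
        ≤ ∑ p ∈ antidiagonal n, complexity (powL S (m + 1)) p.1 * complexity S p.2 :=
          complexity_prodL_le _ _ _
      _ ≤ ∑ _p ∈ antidiagonal n, D ^ (m + 1) * (n + 1) ^ m * D := by
          refine Finset.sum_le_sum fun p hp ↦ Nat.mul_le_mul ((ih p.1).trans ?_) (hS p.2)
          gcongr
          exact Finset.HasAntidiagonal.antidiagonal.fst_le hp
      _ = D ^ (m + 1 + 1) * (n + 1) ^ (m + 1) := by
          rw [Finset.sum_const, Finset.Nat.card_antidiagonal, smul_eq_mul]
          ring

end Powers

section Dimension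

lemma polyBound_zero_iff {f : ℕ → ℕ} : PolyBound f 0 ↔ ∃ D, ∀ n, f n ≤ D := by
  simp only [PolyBound, Real.rpow_zero, mul_one]
  constructor
  · rintro ⟨C, hC⟩
    refine ⟨max (f 0) ⌈C⌉₊, fun n ↦ ?_⟩
    rcases n.eq_zero_or_pos with rfl | hn
    · exact le_max_left _ _
    · exact le_max_of_le_right (Nat.cast_le.1 ((hC n hn).trans (Nat.le_ceil C)))
  · rintro ⟨D, hD⟩
    exact ⟨D, fun n _ ↦ Nat.cast_le.2 (hD n)⟩

lemma isBigO_complexity_powL_succ [Finite A] {S : Set (List A)}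
    (hS : PolyBound (complexity S) 0) (m : ℕ) :
    (fun n ↦ (complexity (powL S (m + 1)) n : ℝ)) =O[atTop] fun n ↦ (n : ℝ) ^ m := by
  obtain ⟨D, hD⟩ := polyBound_zero_iff.1 hS
  refine IsBigO.of_bound (D ^ (m + 1) * 2 ^ m) ?_
  filter_upwards [eventually_ge_atTop 1] with n hn
  simp only [norm_pow, Real.norm_natCast]
  norm_cast
  calc complexity (powL S (m + 1)) n
      ≤ D ^ (m + 1) * (n + 1) ^ m := complexity_powL_succ_le hD m n
    _ ≤ D ^ (m + 1) * (2 * n) ^ m := by gcongr; omega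
    _ = D ^ (m + 1) * 2 ^ m * n ^ m := by rw [mul_pow, mul_assoc]

lemma le_of_isBigO_natCast_pow {p q : ℕ}
    (h : (fun n : ℕ ↦ (n : ℝ) ^ p) =O[atTop] fun n : ℕ ↦ (n : ℝ) ^ q) : p ≤ q := by
  by_contra! hqp
  refine h.not_isLittleO (Eventually.frequently ?_)
    (isLittleO_pow_pow_atTop_of_lt hqp).natCast_atTop
  filter_upwards [eventually_ne_atTop 0] with n hn
  positivity

lemma polyDim_le {L S : Set (List A)} {α : ℝ} {m : ℕ} (hm : 1 ≤ m)
    (hS : PolyBound (complexity S) α) (hL : L ⊆ powL S m) : polyDim α L ≤ m :=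
  sInf_le ⟨m, rfl, hm, S, hS, hL⟩

theorem succ_le_polyDim_zero_of_isBigO [Finite A] {L : Set (List A)} {h : ℕ}
    (hL : (fun n : ℕ ↦ (n : ℝ) ^ h) =O[atTop] fun n ↦ (complexity L n : ℝ)) :
    ((h + 1 : ℕ) : ℕ∞) ≤ polyDim 0 L := by
  refine le_sInf ?_
  rintro _ ⟨m, rfl, hm, S, hS, hLS⟩
  obtain ⟨m, rfl⟩ := Nat.exists_eq_add_of_le' hm
  have hmono : (fun n ↦ (complexity L n : ℝ)) =O[atTop]
      fun n ↦ (complexity (powL S (m + 1)) n : ℝ) :=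
    .of_norm_le fun n ↦ by simpa using complexity_mono hLS n
  have := le_of_isBigO_natCast_pow
    (hL.trans (hmono.trans (isBigO_complexity_powL_succ hS m)))
  exact_mod_cast Nat.succ_le_succ this

lemma cost_eq_zero_of_polyDim_zero_ne_top {L : Set (List A)} (h : polyDim 0 L ≠ ⊤) :
    cost L = 0 :=
  le_antisymm (sInf_le ⟨0, le_rfl, ENNReal.ofReal_zero.symm, h⟩) zero_le

lemma isBigO_pow_of_choose_le {f : ℕ → ℕ} {h : ℕ} (hf : ∀ n, n.choose h ≤ f n) :
    (fun n : ℕ ↦ (n : ℝ) ^ h) =O[atTop] fun n ↦ (f n : ℝ) :=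
  (isTheta_choose h).isBigO_symm.trans (.of_norm_le fun n ↦ by simpa using hf n)

lemma exists_mul_pow_le_of_isBigO {f : ℕ → ℕ} {h : ℕ}
    (hf : (fun n : ℕ ↦ (n : ℝ) ^ h) =O[atTop] fun n ↦ (f n : ℝ)) :
    ∃ K : ℝ, 0 < K ∧ ∃ N : ℕ, ∀ n : ℕ, N ≤ n → K * (n : ℝ) ^ h ≤ f n := by
  obtain ⟨C, hC, hbound⟩ := hf.exists_pos
  obtain ⟨N, hN⟩ := eventually_atTop.1 hbound.bound
  refine ⟨C⁻¹, inv_pos.2 hC, N, fun n hn ↦ ?_⟩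
  rw [inv_mul_le_iff₀ hC]
  simpa using hN n hn

end Dimension

section Words

@[simp]
lemma length_wordSeg (x : ℕ → A) (i n : ℕ) : (wordSeg x i n).length = n := by
  simp [wordSeg]

lemma wordSeg_add (x : ℕ → A) (i m n : ℕ) :
    wordSeg x i (m + n) = wordSeg x i m ++ wordSeg x (i + m) n := by
  simp [wordSeg, List.range_add, Function.comp_def, add_assoc]

lemma wordSeg_succ (x : ℕ → A) (i n : ℕ) :
    wordSeg x i (n + 1) = x i :: wordSeg x (i + 1) n := by
  rw [add_comm, wordSeg_add]
  rfl

lemma wordSeg_eq_wordSeg_iff {x y : ℕ → A} {i j n : ℕ} :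
    wordSeg x i n = wordSeg y j n ↔ ∀ t < n, x (i + t) = y (j + t) := by
  simp [wordSeg]

lemma wordSeg_const (a : A) (i n : ℕ) : wordSeg (fun _ ↦ a) i n = List.replicate n a := by
  simp [wordSeg]

lemma count_wordSeg [DecidableEq A] (x : ℕ → A) (a : A) (i n : ℕ) :
    (wordSeg x i n).count a = {t ∈ Finset.range n | x (i + t) = a}.card := by
  rw [wordSeg, List.count_eq_countP, List.countP_map, ← Nat.count_eq_card_filter_range]
  rfl

lemma one_le_complexity_Fac [Finite A] (x : ℕ → A) (n : ℕ) : 1 ≤ complexity (Fac x) n :=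
  (Set.ncard_pos (finite_length_eq _ n)).2 ⟨wordSeg x 0 n, ⟨0, n, rfl⟩, length_wordSeg x 0 n⟩

lemma injOn_length_Fac_const (a : A) : (Fac fun _ ↦ a).InjOn List.length := by
  rintro _ ⟨i, n, rfl⟩ _ ⟨j, m, rfl⟩ hnm
  simp only [length_wordSeg] at hnm
  rw [wordSeg_const, wordSeg_const, hnm]

end Words

section BinaryWords

/-- The words `0 ⋯ 0`, with `false` as the letter `0`. -/
def zeroRuns : Set (List Bool) := Set.range fun n ↦ List.replicate n false

/-- The words `1 0 ⋯ 0`, with `true` as the letter `1`; they are the pieces into which a binary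
word starting with `1` is cut. -/
def oneRuns : Set (List Bool) := Set.range fun n ↦ true :: List.replicate n false

lemma injOn_length_zeroRuns : zeroRuns.InjOn List.length := by
  rintro _ ⟨n, rfl⟩ _ ⟨m, rfl⟩ hnm
  simpa using hnm

lemma injOn_length_oneRuns : oneRuns.InjOn List.length := by
  rintro _ ⟨n, rfl⟩ _ ⟨m, rfl⟩ hnm
  simpa using hnm

variable {S : Set (List Bool)}

lemma exists_eq_replicate_append_mem_powL (hS : oneRuns ⊆ S) (u : List Bool) :
    ∃ n, ∃ v ∈ powL S (u.count true), u = List.replicate n false ++ v := by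
  induction u with
  | nil => exact ⟨0, [], rfl, rfl⟩
  | cons b u ih =>
    obtain ⟨n, v, hv, huv⟩ := ih
    cases b with
    | false => exact ⟨n + 1, v, by simpa using hv, congrArg (false :: ·) huv⟩
    | true =>
      refine ⟨0, true :: u, ?_, rfl⟩
      rw [List.count_cons_self, huv, ← List.cons_append, ← huv]
      exact append_mem_powL_succ (hS ⟨n, rfl⟩) hv

lemma mem_powL_count_true_add_one (h0 : zeroRuns ⊆ S) (h1 : oneRuns ⊆ S) (u : List Bool) :
    u ∈ powL S (u.count true + 1) := by
  obtain ⟨n, v, hv, huv⟩ := exists_eq_replicate_append_mem_powL h1 u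
  have := append_mem_powL_succ (h0 ⟨n, rfl⟩) hv
  rwa [← huv] at this

lemma true_cons_mem_powL_count_true (h1 : oneRuns ⊆ S) (u : List Bool) :
    true :: u ∈ powL S ((true :: u).count true) := by
  obtain ⟨n, v, hv, huv⟩ := exists_eq_replicate_append_mem_powL h1 (true :: u)
  cases n with
  | zero =>
    obtain rfl : true :: u = v := huv
    exact hv
  | succ n => simp [List.replicate_succ] at huv

/-- The binary word of length `n` whose ones are at the positions in `T`. -/
def indicatorWord (T : Finset ℕ) (n : ℕ) : List Bool := wordSeg (fun t ↦ decide (t ∈ T)) 0 n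

lemma injOn_indicatorWord (n : ℕ) :
    Set.InjOn (indicatorWord · n) {T | T ⊆ Finset.range n} := by
  intro T hT T' hT' hw
  have hiff := wordSeg_eq_wordSeg_iff.1 hw
  simp only [zero_add, decide_eq_decide] at hiff
  ext t
  exact ⟨fun ht ↦ (hiff t (Finset.mem_range.1 (hT ht))).1 ht,
    fun ht ↦ (hiff t (Finset.mem_range.1 (hT' ht))).2 ht⟩

lemma choose_le_complexity_of_indicatorWord_mem {L : Set (List Bool)} {h n : ℕ}
    (hL : ∀ T ⊆ Finset.range n, T.card = h → indicatorWord T n ∈ L) :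
    n.choose h ≤ complexity L n := by
  have hinj : Set.InjOn (indicatorWord · n) (Finset.powersetCard h (Finset.range n)) :=
    (injOn_indicatorWord n).mono fun T hT ↦ (Finset.mem_powersetCard.1 hT).1
  rw [← Finset.card_range n, ← Finset.card_powersetCard, Finset.card_range,
    ← Set.ncard_coe_finset, ← hinj.ncard_image]
  refine Set.ncard_le_ncard ?_ (finite_length_eq L n)
  rintro _ ⟨T, hT, rfl⟩
  obtain ⟨hTn, hTh⟩ := Finset.mem_powersetCard.1 hT
  exact ⟨hL T hTn hTh, length_wordSeg _ 0 n⟩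

end BinaryWords

section ClusterWord

variable (G : ℕ → Finset ℕ)

/-- The position at which the cluster of ones `G M` is placed. The block from `clusterStart G M` to
`clusterStart G (M + 1)` consists of the cluster and of a gap longer than `clusterStart G M`. -/
def clusterStart : ℕ → ℕ
  | 0 => 0
  | M + 1 => 2 * clusterStart M + (G M).sup Nat.succ + 1

open Classical in
/-- The binary word whose ones are at the positions `clusterStart G M + g` with `g ∈ G M`: sparser
and sparser clusters of prescribed shapes. -/
noncomputable def clusterWord (n : ℕ) : Bool :=
  decide (∃ M, ∃ g ∈ G M, clusterStart G M + g = n)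

/-- The factors of `clusterWord G` which end at the end of a block `M` and are longer than
`clusterStart G M`. -/
def blockTails : Set (List Bool) :=
  {u | ∃ M i n, clusterStart G M < n ∧ i + n = clusterStart G (M + 1) ∧
    u = wordSeg (clusterWord G) i n}

/-- The language of bounded complexity whose powers contain the factors of `clusterWord G`. -/
def clusterPieces : Set (List Bool) := zeroRuns ∪ oneRuns ∪ blockTails G

variable {G}

lemma strictMono_clusterStart : StrictMono (clusterStart G) :=
  strictMono_nat_of_lt_succ fun M ↦ by rw [clusterStart]; omega

lemma two_mul_clusterStart_add_lt {M g : ℕ} (hg : g ∈ G M) :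
    2 * clusterStart G M + g + 1 < clusterStart G (M + 1) := by
  have : g.succ ≤ (G M).sup Nat.succ := Finset.le_sup (f := Nat.succ) hg
  rw [clusterStart]
  omega

lemma clusterWord_eq_true_iff {M n : ℕ} (hn : clusterStart G M ≤ n)
    (hn' : n < clusterStart G (M + 1)) :
    clusterWord G n = true ↔ ∃ g ∈ G M, clusterStart G M + g = n := by
  simp only [clusterWord, decide_eq_true_iff]
  refine ⟨?_, fun hM ↦ ⟨M, hM⟩⟩
  rintro ⟨M', g, hg, rfl⟩
  have hlt : clusterStart G M' + g < clusterStart G (M' + 1) := by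
    have := two_mul_clusterStart_add_lt hg
    omega
  obtain rfl : M = M' := strictMono_clusterStart.monotone.pairwise_disjoint_on_Ico_succ.eq
    (Set.not_disjoint_iff.2 ⟨_, ⟨hn, hn'⟩, Nat.le_add_right _ _, hlt⟩)
  exact ⟨g, hg, rfl⟩

lemma clusterWord_eq_false {M n : ℕ} (hn : clusterStart G (M + 1) ≤ n + clusterStart G M)
    (hn' : n < clusterStart G (M + 1)) : clusterWord G n = false := by
  have hstart : clusterStart G M ≤ n := by
    rw [clusterStart] at hn
    omega
  rw [← Bool.not_eq_true, clusterWord_eq_true_iff hstart hn']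
  rintro ⟨g, hg, rfl⟩
  have := two_mul_clusterStart_add_lt hg
  omega

lemma count_true_wordSeg_clusterWord_le {M i n : ℕ} (hi : clusterStart G M ≤ i)
    (hn : i + n ≤ clusterStart G (M + 1)) :
    (wordSeg (clusterWord G) i n).count true ≤ (G M).card := by
  rw [count_wordSeg]
  refine Finset.card_le_card_of_injOn (fun t ↦ i + t - clusterStart G M) (fun t ht ↦ ?_) ?_
  · obtain ⟨htn, htrue⟩ := Finset.mem_filter.1 ht
    rw [Finset.mem_range] at htn
    obtain ⟨g, hg, hgt⟩ := (clusterWord_eq_true_iff (M := M) (by omega) (by omega)).1 htrue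
    simpa [← hgt] using hg
  · intro t _ t' _ htt'
    simp only at htt'
    omega

lemma injOn_length_blockTails : (blockTails G).InjOn List.length := by
  rintro _ ⟨M, i, n, hn, hin, rfl⟩ _ ⟨M', i', n', hn', hin', rfl⟩ hnn'
  simp only [length_wordSeg] at hnn'
  subst hnn'
  obtain rfl : M = M' := strictMono_clusterStart.monotone.pairwise_disjoint_on_Ioc_succ.eq
    (Set.not_disjoint_iff.2 ⟨n, ⟨hn, hin ▸ n.le_add_left i⟩, hn', hin' ▸ n.le_add_left i'⟩)
  rw [Nat.add_right_cancel (hin.trans hin'.symm)]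

lemma complexity_clusterPieces_le (n : ℕ) : complexity (clusterPieces G) n ≤ 3 :=
  calc complexity (clusterPieces G) n
      ≤ complexity zeroRuns n + complexity oneRuns n + complexity (blockTails G) n :=
        (complexity_union_le _ _ n).trans (Nat.add_le_add_right (complexity_union_le _ _ n) _)
    _ ≤ 1 + 1 + 1 := by
        gcongr
        · exact complexity_le_one_of_injOn_length injOn_length_zeroRuns n
        · exact complexity_le_one_of_injOn_length injOn_length_oneRuns n
        · exact complexity_le_one_of_injOn_length injOn_length_blockTails n

lemma zeroRuns_subset_clusterPieces : zeroRuns ⊆ clusterPieces G :=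
  fun _ hu ↦ Or.inl (Or.inl hu)

lemma oneRuns_subset_clusterPieces : oneRuns ⊆ clusterPieces G :=
  fun _ hu ↦ Or.inl (Or.inr hu)

lemma wordSeg_clusterWord_mem_clusterPieces {M i n : ℕ} (hin : i + n = clusterStart G M) :
    wordSeg (clusterWord G) i n ∈ clusterPieces G := by
  cases M with
  | zero =>
    obtain rfl : n = 0 := (Nat.add_eq_zero_iff.1 hin).2
    exact zeroRuns_subset_clusterPieces ⟨0, rfl⟩
  | succ M =>
    rcases lt_or_ge (clusterStart G M) n with hlong | hshort
    · exact Or.inr ⟨M, i, n, hlong, hin, rfl⟩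
    · have hzero : wordSeg (clusterWord G) i n = List.replicate n false := by
        rw [← wordSeg_const false i, wordSeg_eq_wordSeg_iff]
        exact fun t ht ↦ clusterWord_eq_false (M := M) (by omega) (by omega)
      exact zeroRuns_subset_clusterPieces ⟨n, hzero.symm⟩

lemma wordSeg_clusterStart_mem_powL {M n : ℕ} (h0 : 0 ∈ G M)
    (hn : clusterStart G M + n ≤ clusterStart G (M + 1)) :
    wordSeg (clusterWord G) (clusterStart G M) n ∈ powL (clusterPieces G) (G M).card := by
  refine powL_subset_powL (zeroRuns_subset_clusterPieces ⟨0, rfl⟩)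
    (count_true_wordSeg_clusterWord_le le_rfl hn) ?_
  cases n with
  | zero => exact rfl
  | succ n =>
    have htrue : clusterWord G (clusterStart G M) = true :=
      (clusterWord_eq_true_iff le_rfl (strictMono_clusterStart M.lt_succ_self)).2 ⟨0, h0, rfl⟩
    rw [wordSeg_succ, htrue]
    exact true_cons_mem_powL_count_true oneRuns_subset_clusterPieces _

theorem Fac_clusterWord_subset_powL {h : ℕ} (h0 : ∀ M, 0 ∈ G M) (hcard : ∀ M, (G M).card ≤ h) :
    Fac (clusterWord G) ⊆ powL (clusterPieces G) (h + 1) := by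
  have hnil : [] ∈ clusterPieces G := zeroRuns_subset_clusterPieces ⟨0, rfl⟩
  rintro _ ⟨i, n, rfl⟩
  obtain ⟨M, hM, hM'⟩ : ∃ M, clusterStart G M ≤ i + n ∧ i + n < clusterStart G (M + 1) := by
    simpa using (iUnion_Ico_map_succ_eq_Ici (f := clusterStart G)
      (fun _ ↦ strictMono_clusterStart.monotone bot_le)
      strictMono_clusterStart.not_bddAbove_range_of_wellFoundedLT).ge (Nat.zero_le (i + n))
  rcases le_total (clusterStart G M) i with hi | hi
  · exact powL_subset_powL hnil
      (Nat.succ_le_succ ((count_true_wordSeg_clusterWord_le hi hM'.le).trans (hcard M)))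
      (mem_powL_count_true_add_one zeroRuns_subset_clusterPieces oneRuns_subset_clusterPieces _)
  · obtain ⟨m, hm⟩ := Nat.exists_eq_add_of_le hi
    obtain ⟨l, rfl⟩ : ∃ l, n = m + l := Nat.exists_eq_add_of_le (by omega)
    rw [wordSeg_add, ← hm]
    exact append_mem_powL_succ (wordSeg_clusterWord_mem_clusterPieces hm.symm)
      (powL_subset_powL hnil (hcard M) (wordSeg_clusterStart_mem_powL (h0 M) (by omega)))

lemma wordSeg_clusterWord_eq_indicatorWord {M i m n : ℕ} (him : i + m = clusterStart G (M + 1))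
    (hm : m ≤ clusterStart G M) (hn : i + n ≤ clusterStart G (M + 1 + 1)) :
    wordSeg (clusterWord G) i n = indicatorWord ((G (M + 1)).map (addLeftEmbedding m)) n := by
  refine wordSeg_eq_wordSeg_iff.2 fun t ht ↦ ?_
  rw [Bool.eq_iff_iff, decide_eq_true_iff, Finset.mem_map, zero_add]
  rcases lt_or_ge t m with htm | htm
  · rw [clusterWord_eq_false (M := M) (by omega) (by omega)]
    simp only [Bool.false_eq_true, false_iff]
    rintro ⟨g, -, rfl⟩
    exact htm.not_ge (Nat.le_add_right m g)
  · rw [clusterWord_eq_true_iff (M := M + 1) (by omega) (by omega), ← him]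
    simp only [addLeftEmbedding_apply, add_assoc, Nat.add_left_cancel_iff]

lemma exists_eq_map_addLeftEmbedding {T : Finset ℕ} (hT : T.Nonempty) :
    ∃ m, ∃ T' : Finset ℕ, 0 ∈ T' ∧ T = T'.map (addLeftEmbedding m) := by
  set m := T.min' hT
  refine ⟨m, T.image (· - m), Finset.mem_image.2 ⟨m, T.min'_mem hT, m.sub_self⟩, ?_⟩
  rw [Finset.map_eq_image, Finset.image_image]
  refine (Finset.image_id.symm.trans (Finset.image_congr fun t ht ↦ ?_))
  exact (Nat.add_sub_cancel' (T.min'_le t ht)).symm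

theorem choose_le_complexity_Fac_clusterWord {h : ℕ} (hh : h ≠ 0)
    (hG : ∀ T : Finset ℕ, 0 ∈ T → T.card = h → ∀ N, ∃ M ≥ N, G M = T) (n : ℕ) :
    n.choose h ≤ complexity (Fac (clusterWord G)) n := by
  refine choose_le_complexity_of_indicatorWord_mem fun T hT hcard ↦ ?_
  obtain ⟨m, T, h0, rfl⟩ :=
    exists_eq_map_addLeftEmbedding (Finset.card_ne_zero.1 (hcard ▸ hh))
  have hmn : m < n := Finset.mem_range.1 (hT (Finset.mem_map.2 ⟨0, h0, m.add_zero⟩))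
  rw [Finset.card_map] at hcard
  obtain ⟨M', hM', rfl⟩ := hG T h0 hcard (n + 1)
  obtain ⟨M, rfl⟩ := Nat.exists_eq_add_of_le' (Nat.one_le_of_lt hM')
  have hn : n ≤ clusterStart G M :=
    (Nat.le_of_succ_le_succ hM').trans (strictMono_clusterStart.le_apply)
  have hstart : clusterStart G M ≤ clusterStart G (M + 1) :=
    strictMono_clusterStart.monotone M.le_succ
  have hgap : 2 * clusterStart G (M + 1) < clusterStart G (M + 1 + 1) := by
    have := two_mul_clusterStart_add_lt h0
    omega
  rw [← wordSeg_clusterWord_eq_indicatorWord (i := clusterStart G (M + 1) - m)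
    (by omega) (by omega) (by omega)]
  exact ⟨_, _, rfl⟩

end ClusterWord

lemma exists_seq_frequently_eq (α : Type*) [Countable α] [Nonempty α] :
    ∃ f : ℕ → α, ∀ a N, ∃ M ≥ N, f M = a := by
  obtain ⟨e, he⟩ := exists_surjective_nat α
  refine ⟨fun M ↦ e M.unpair.1, fun a N ↦ ?_⟩
  obtain ⟨b, rfl⟩ := he a
  exact ⟨Nat.pair b N, Nat.right_le_pair b N, by simp only [Nat.unpair_pair]⟩

theorem exists_Fac_subset_powL_choose_le_complexity (h : ℕ) :
    ∃ (x : ℕ → Bool) (S : Set (List Bool)), PolyBound (complexity S) 0 ∧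
      Fac x ⊆ powL S (h + 1) ∧ ∀ n, n.choose h ≤ complexity (Fac x) n := by
  rcases eq_or_ne h 0 with rfl | hh
  · refine ⟨fun _ ↦ false, Fac fun _ ↦ false, polyBound_zero_iff.2 ⟨1, ?_⟩, ?_, fun n ↦ ?_⟩
    · exact complexity_le_one_of_injOn_length (injOn_length_Fac_const false)
    · exact (powL_one _).ge
    · exact n.choose_zero_right ▸ one_le_complexity_Fac _ n
  · have : Nonempty {T : Finset ℕ // 0 ∈ T ∧ T.card = h} :=
      ⟨Finset.range h, Finset.mem_range.2 hh.pos, Finset.card_range h⟩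
    obtain ⟨f, hf⟩ := exists_seq_frequently_eq {T : Finset ℕ // 0 ∈ T ∧ T.card = h}
    refine ⟨clusterWord (fun M ↦ (f M).1), clusterPieces fun M ↦ (f M).1,
      polyBound_zero_iff.2 ⟨3, complexity_clusterPieces_le⟩,
      Fac_clusterWord_subset_powL (fun M ↦ (f M).2.1) (fun M ↦ (f M).2.2.le),
      choose_le_complexity_Fac_clusterWord hh fun T h0 hcard N ↦ ?_⟩
    obtain ⟨M, hM, hfM⟩ := hf ⟨T, h0, hcard⟩ N
    exact ⟨M, hM, congrArg Subtype.val hfM⟩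

/-- for each `k ≥ 1` there is an infinite word `x` over a finite alphabet
with `p_x(n) = Ω(n^{k-1})`, `d₀(x) = k` and `c(x) = 0` (so the cost dimension is `k`). -/
theorem stmt8 (k : ℕ) (hk : 1 ≤ k) :
    ∃ (A : Type) (_ : Fintype A) (_ : Nonempty A) (x : ℕ → A),
      (∃ K : ℝ, 0 < K ∧ ∃ N : ℕ, ∀ n : ℕ, N ≤ n →
        K * (n : ℝ) ^ ((k : ℝ) - 1) ≤ (complexity (Fac x) n : ℝ)) ∧
      polyDim 0 (Fac x) = (k : ℕ∞) ∧
      cost (Fac x) = 0 := by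
  obtain ⟨h, rfl⟩ := Nat.exists_eq_add_of_le' hk
  obtain ⟨x, S, hS, hsub, hchoose⟩ := exists_Fac_subset_powL_choose_le_complexity h
  have hgrowth := isBigO_pow_of_choose_le hchoose
  have hdim : polyDim 0 (Fac x) = (h + 1 : ℕ) :=
    le_antisymm (polyDim_le hk hS hsub) (succ_le_polyDim_zero_of_isBigO hgrowth)
  refine ⟨Bool, inferInstance, inferInstance, x, ?_, hdim,
    cost_eq_zero_of_polyDim_zero_ne_top (hdim ▸ ENat.natCast_ne_top _)⟩
  simpa only [Nat.cast_succ, add_sub_cancel_right, Real.rpow_natCast] using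
    exists_mul_pow_le_of_isBigO hgrowth
end

section
/- For every aperiodic one-sided or two-sided infinite word x over A, there exists a 3-marker set M for x such that p_M(n) ≤ p_x(4n)/n for every n ≥ 1. -/
open scoped ENNReal Pointwise

universe u

variable {A : Type u}

/-!
Fix `n` and consider the factors of length `m` of `x`, for some `m ∈ [2n, 4n)`, as the states of a
sliding window. As long as the window is not right special, its content determines the next letter,
so by aperiodicity it eventually becomes right special, after a hitting time that depends only on
its content. The hitting time decreases by one at each step until it vanishes; hence, for any
residue `r`, every `2n` consecutive windows include one that is right special or has hitting time
congruent to `r` modulo `2n`. The prefixes of length `n` of these windows are the markers.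

The least popular residue accounts for at most `p(m) / 2n ≤ p(4n) / 2n` windows. Since `p` increases
at `m` by at least the number of right special factors of length `m`, averaging over
`2n ≤ m < 4n` gives an `m` with at most `p(4n) / 2n` of those.

A two-sided word may be periodic on one side only; the argument runs in the other direction, by
passing to reversed words if needed.
-/

theorem exists_card_mul_ncard_fiber_le {V β : Type*} {s : Set V} (hs : s.Finite) (f : V → β)
    {t : Finset β} (ht : t.Nonempty) :
    ∃ b ∈ t, t.card * {v ∈ s | f v = b}.ncard ≤ s.ncard := by
  classical
  lift s to Finset V using hs
  have ht_pos : (0 : ℚ) < t.card := by exact_mod_cast ht.card_pos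
  obtain ⟨b, hb, hle⟩ := Finset.exists_card_fiber_le_of_card_le_nsmul (s := s) (f := f)
    (b := (s.card : ℚ) / t.card) ht (by rw [nsmul_eq_mul, mul_div_cancel₀ _ ht_pos.ne'])
  refine ⟨b, hb, ?_⟩
  rw [le_div_iff₀' ht_pos] at hle
  have coe_fiber : {v ∈ (s : Set V) | f v = b} = ({v ∈ s | f v = b} : Finset V) := by simp
  rw [coe_fiber, Set.ncard_coe_finset, Set.ncard_coe_finset]
  exact_mod_cast hle

section HittingTime

variable {ι V : Type*} [AddMonoidWithOne ι] {w : ι → V} {R : Set V} {i j : ι} {k : ℕ}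

/-- Outside the set of states `R`, the state of the trajectory `w` at time `i` determines its state
at time `i + 1`. For the trajectory of length-`m` factors of a word and `R` the right special
factors, this says that the Rauzy graph branches only at right special vertices. -/
def DeterministicOff (w : ι → V) (R : Set V) : Prop :=
  ∀ ⦃i j⦄, w i = w j → w i ∉ R → w (i + 1) = w (j + 1)

/-- The number of steps the trajectory `w` needs to reach `R` from time `i`, with the junk value `0`
if it never does. -/
noncomputable def hittingTime (w : ι → V) (R : Set V) (i : ι) : ℕ := sInf {k : ℕ | w (i + k) ∈ R}

theorem hittingTime_le (h : w (i + k) ∈ R) : hittingTime w R i ≤ k := Nat.sInf_le h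

theorem notMem_of_lt_hittingTime (h : k < hittingTime w R i) : w (i + k) ∉ R :=
  Nat.notMem_of_lt_sInf h

theorem apply_add_hittingTime_mem (hR : ∃ k : ℕ, w (i + k) ∈ R) :
    w (i + hittingTime w R i) ∈ R :=
  Nat.sInf_mem hR

theorem hittingTime_add (hR : ∀ i, ∃ k : ℕ, w (i + k) ∈ R) (hk : k ≤ hittingTime w R i) :
    hittingTime w R (i + k) = hittingTime w R i - k := by
  apply le_antisymm
  · apply hittingTime_le
    rw [add_assoc, ← Nat.cast_add, Nat.add_sub_cancel' hk]
    exact apply_add_hittingTime_mem (hR i)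
  · rw [Nat.sub_le_iff_le_add']
    apply hittingTime_le
    rw [Nat.cast_add, ← add_assoc]
    exact apply_add_hittingTime_mem (hR (i + k))

namespace DeterministicOff

theorem apply_add_eq (hw : DeterministicOff w R) (hij : w i = w j) :
    ∀ k : ℕ, (∀ l < k, w (i + l) ∉ R) → w (i + k) = w (j + k)
  | 0, _ => by simpa only [Nat.cast_zero, add_zero] using hij
  | k + 1, hk => by
    simpa only [Nat.cast_succ, add_assoc] using
      hw (hw.apply_add_eq hij k fun l hl => hk l (hl.trans k.lt_succ_self)) (hk k k.lt_succ_self)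

theorem hittingTime_congr (hw : DeterministicOff w R) (hR : ∀ i, ∃ k : ℕ, w (i + k) ∈ R)
    (hij : w i = w j) : hittingTime w R i = hittingTime w R j := by
  have le_of_eq {i j : ι} (h : w i = w j) : hittingTime w R j ≤ hittingTime w R i := by
    apply hittingTime_le
    rw [← hw.apply_add_eq h _ fun _ => notMem_of_lt_hittingTime]
    exact apply_add_hittingTime_mem (hR i)
  exact le_antisymm (le_of_eq hij.symm) (le_of_eq hij)

theorem ultimatelyPeriodic (hw : DeterministicOff w R) (hfin : (Set.range w).Finite)
    (hi : ∀ k : ℕ, w (i + k) ∉ R) : UltimatelyPeriodic fun k : ℕ => w (i + k) := by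
  obtain ⟨a, b, hab, heq⟩ : ∃ a b : ℕ, a < b ∧ w (i + a) = w (i + b) :=
    Set.Finite.exists_lt_map_eq_of_forall_mem (fun k => Set.mem_range_self (i + (k : ι))) hfin
  refine ⟨a, b - a, Nat.sub_pos_of_lt hab, fun n hn => ?_⟩
  have h := hw.apply_add_eq heq (n - a) fun l _ => by
    simpa only [Nat.cast_add, add_assoc] using hi (a + l)
  rw [add_assoc, add_assoc, ← Nat.cast_add, ← Nat.cast_add, Nat.add_sub_cancel' hn] at h
  simpa only [show n + (b - a) = b + (n - a) by omega] using h.symm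

/-- `S` consists of the states whose hitting time is congruent to `r` modulo `N`, for the least
popular residue `r`. -/
theorem exists_hitting_set (hw : DeterministicOff w R) (hR : ∀ i, ∃ k : ℕ, w (i + k) ∈ R)
    (hfin : (Set.range w).Finite) {N : ℕ} (hN : 0 < N) :
    ∃ S ⊆ Set.range w, N * S.ncard ≤ (Set.range w).ncard ∧
      ∀ i, ∃ k < N, w (i + k) ∈ R ∪ S := by
  let timeFrom : V → ℕ := Function.extend w (hittingTime w R) 0
  have timeFrom_apply (i : ι) : timeFrom (w i) = hittingTime w R i :=
    Function.FactorsThrough.extend_apply (fun _ _ => hw.hittingTime_congr hR) 0 i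
  obtain ⟨r, hr, hcard⟩ :=
    exists_card_mul_ncard_fiber_le hfin (fun v => timeFrom v % N)
      (Finset.nonempty_range_iff.2 hN.ne')
  simp only [Finset.mem_range, Finset.card_range] at hr hcard
  refine ⟨{v ∈ Set.range w | timeFrom v % N = r}, Set.sep_subset _ _, hcard, fun i => ?_⟩
  obtain hlt | hge := lt_or_ge (hittingTime w R i) N
  · exact ⟨_, hlt, .inl (apply_add_hittingTime_mem (hR i))⟩
  · refine ⟨(hittingTime w R i - r) % N, Nat.mod_lt _ hN, .inr ⟨Set.mem_range_self _, ?_⟩⟩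
    have hdiv := Nat.mod_add_div (hittingTime w R i - r) N
    rw [timeFrom_apply, hittingTime_add hR (by omega),
      show hittingTime w R i - (hittingTime w R i - r) % N =
        r + N * ((hittingTime w R i - r) / N) by omega,
      Nat.add_mul_mod_self_left, Nat.mod_eq_of_lt hr]

end DeterministicOff

end HittingTime

section Complexity

variable {L : Set (List A)}

theorem RightSpecial.exists_append_singleton_ne {u : List A} (hu : RightSpecial L u) (v : List A) :
    ∃ a, u ++ [a] ∈ L ∧ u ++ [a] ≠ v := by
  obtain ⟨-, a, b, hab, ha, hb⟩ := hu
  by_cases h : u ++ [a] = v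
  · exact ⟨b, hb, fun h' => hab (by simpa using h.trans h'.symm)⟩
  · exact ⟨a, ha, h⟩

variable [Finite A]

theorem finite_setOf_mem_and_length_eq (L : Set (List A)) (n : ℕ) :
    {u ∈ L | u.length = n}.Finite :=
  (List.finite_length_eq A n).subset fun _ hu => hu.2

theorem complexity_add_complexity_rightSpecial_le (hL : ∀ u ∈ L, ∃ a, u ++ [a] ∈ L) (n : ℕ) :
    complexity L n + complexity {u | RightSpecial L u} n ≤ complexity L (n + 1) := by
  have exists_ext : ∀ u ∈ L, ∃ v ∈ L, v.dropLast = u ∧ v.length = u.length + 1 := fun u hu =>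
    let ⟨a, ha⟩ := hL u hu
    ⟨u ++ [a], ha, List.dropLast_concat, by simp⟩
  choose! f f_mem dropLast_f length_f using exists_ext
  have exists_other_ext : ∀ u, RightSpecial L u →
      ∃ v ∈ L, v ≠ f u ∧ v.dropLast = u ∧ v.length = u.length + 1 := fun u hu =>
    let ⟨a, ha, hne⟩ := hu.exists_append_singleton_ne (f u)
    ⟨u ++ [a], ha, hne, List.dropLast_concat, by simp⟩
  choose! g g_mem g_ne dropLast_g length_g using exists_other_ext
  have disjoint_images : Disjoint (f '' {u ∈ L | u.length = n})
      (g '' {u ∈ {u | RightSpecial L u} | u.length = n}) := by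
    rw [Set.disjoint_left]
    rintro _ ⟨u, ⟨hu, -⟩, rfl⟩ ⟨v, ⟨hv, -⟩, hvu⟩
    obtain rfl : v = u := by rw [← dropLast_g v hv, hvu, dropLast_f u hu]
    exact g_ne v hv hvu
  have injOn_f : Set.InjOn f {u ∈ L | u.length = n} :=
    Set.LeftInvOn.injOn fun u hu => dropLast_f u hu.1
  have injOn_g : Set.InjOn g {u ∈ {u | RightSpecial L u} | u.length = n} :=
    Set.LeftInvOn.injOn fun u hu => dropLast_g u hu.1
  rw [complexity, complexity, complexity, ← injOn_f.ncard_image, ← injOn_g.ncard_image,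
    ← Set.ncard_union_eq disjoint_images ((finite_setOf_mem_and_length_eq L n).image f)
      ((finite_setOf_mem_and_length_eq _ n).image g)]
  refine Set.ncard_le_ncard ?_ (finite_setOf_mem_and_length_eq L (n + 1))
  rintro _ (⟨u, ⟨hu, rfl⟩, rfl⟩ | ⟨u, ⟨hu, rfl⟩, rfl⟩)
  · exact ⟨f_mem u hu, length_f u hu⟩
  · exact ⟨g_mem u hu, length_g u hu⟩

theorem complexity_monotone (hL : ∀ u ∈ L, ∃ a, u ++ [a] ∈ L) : Monotone (complexity L) :=
  monotone_nat_of_le_succ fun n =>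
    (Nat.le_add_right _ _).trans (complexity_add_complexity_rightSpecial_le hL n)

theorem sum_complexity_rightSpecial_le (hL : ∀ u ∈ L, ∃ a, u ++ [a] ∈ L) (a b : ℕ) :
    ∑ t ∈ Finset.range b, complexity {u | RightSpecial L u} (a + t) ≤ complexity L (a + b) := by
  induction b with
  | zero => simp
  | succ b ih =>
    rw [Finset.sum_range_succ]
    have := complexity_add_complexity_rightSpecial_le hL (a + b)
    rw [← add_assoc]
    omega

theorem exists_mul_complexity_rightSpecial_le (hL : ∀ u ∈ L, ∃ a, u ++ [a] ∈ L) (a : ℕ) {b : ℕ}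
    (hb : 0 < b) : ∃ m, a ≤ m ∧ m < a + b ∧
      b * complexity {u | RightSpecial L u} m ≤ complexity L (a + b) := by
  obtain ⟨t, ht, hle⟩ := Finset.exists_le_of_sum_le (s := Finset.range b)
    (f := fun t => b * complexity {u | RightSpecial L u} (a + t))
    (g := fun _ => complexity L (a + b)) (Finset.nonempty_range_iff.2 hb.ne') <| by
      rw [← Finset.mul_sum, Finset.sum_const, Finset.card_range, smul_eq_mul]
      exact Nat.mul_le_mul_left b (sum_complexity_rightSpecial_le hL a b)
  exact ⟨a + t, Nat.le_add_right a t, Nat.add_lt_add_left (Finset.mem_range.1 ht) a, hle⟩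

end Complexity

section Factors

variable {ι : Type*} [AddMonoidWithOne ι] {x : ι → A} {i j : ι} {m : ℕ}

/-- The factor of `x` of length `n` starting at position `i`. The index type is `ℕ` for one-sided
words and `ℤ` for two-sided words, so that both are treated at once. -/
def factorAt (x : ι → A) (i : ι) (n : ℕ) : List A := (List.range n).map fun j : ℕ => x (i + j)

/-- The set of finite factors of a word `x` indexed by `ι`, a common form of `Fac` and `FacZ`. -/
def factorSet (x : ι → A) : Set (List A) := {u | ∃ i n, u = factorAt x i n}

theorem Fac_eq_factorSet (x : ℕ → A) : Fac x = factorSet x := by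
  simp only [Fac, factorSet, wordSeg, factorAt, Nat.cast_id]

theorem wordSegZ_eq_factorAt (x : ℤ → A) (i : ℤ) (n : ℕ) : wordSegZ x i n = factorAt x i n := by
  simp [wordSegZ, factorAt, List.map_eq_flatMap, List.flatMap_assoc]

theorem FacZ_eq_factorSet (x : ℤ → A) : FacZ x = factorSet x := by
  simp only [FacZ, factorSet, wordSegZ_eq_factorAt]

theorem factorAt_mem_factorSet (x : ι → A) (i : ι) (n : ℕ) : factorAt x i n ∈ factorSet x :=
  ⟨i, n, rfl⟩

@[simp]
theorem length_factorAt (x : ι → A) (i : ι) (n : ℕ) : (factorAt x i n).length = n := by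
  simp [factorAt]

theorem factorAt_add (x : ι → A) (i : ι) (k n : ℕ) :
    factorAt x i (k + n) = factorAt x i k ++ factorAt x (i + k) n := by
  simp [factorAt, List.range_add, add_assoc]

theorem factorAt_one (x : ι → A) (i : ι) : factorAt x i 1 = [x i] := by
  simp [factorAt]

theorem factorAt_succ (x : ι → A) (i : ι) (n : ℕ) :
    factorAt x i (n + 1) = factorAt x i n ++ [x (i + n)] := by
  rw [factorAt_add, factorAt_one]

theorem factorAt_succ' (x : ι → A) (i : ι) (n : ℕ) :
    factorAt x i (n + 1) = x i :: factorAt x (i + 1) n := by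
  rw [add_comm, factorAt_add, factorAt_one, Nat.cast_one, List.singleton_append]

theorem take_factorAt (x : ι → A) (i : ι) {n m : ℕ} (h : n ≤ m) :
    (factorAt x i m).take n = factorAt x i n := by
  obtain ⟨k, rfl⟩ := Nat.exists_eq_add_of_le h
  rw [factorAt_add, List.take_left' (length_factorAt x i n)]

theorem factorAt_infix (x : ι → A) (i : ι) {k n m : ℕ} (h : k + n ≤ m) :
    factorAt x (i + k) n <:+: factorAt x i m := by
  obtain ⟨l, rfl⟩ := Nat.exists_eq_add_of_le h
  rw [factorAt_add, factorAt_add]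
  exact List.infix_append _ _ _

theorem exists_append_singleton_mem_factorSet {u : List A} (hu : u ∈ factorSet x) :
    ∃ a, u ++ [a] ∈ factorSet x := by
  obtain ⟨i, n, rfl⟩ := hu
  exact ⟨x (i + n), i, n + 1, (factorAt_succ x i n).symm⟩

theorem complexity_factorSet (x : ι → A) (n : ℕ) :
    complexity (factorSet x) n = (Set.range fun i => factorAt x i n).ncard := by
  rw [complexity]
  congr 1
  ext u
  constructor
  · rintro ⟨⟨i, n, rfl⟩, rfl⟩
    exact ⟨i, by rw [length_factorAt]⟩
  · rintro ⟨i, rfl⟩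
    exact ⟨factorAt_mem_factorSet x i n, length_factorAt x i n⟩

theorem finite_range_factorAt [Finite A] (x : ι → A) (n : ℕ) :
    (Set.range fun i => factorAt x i n).Finite :=
  (List.finite_length_eq A n).subset <| Set.range_subset_iff.2 fun i => length_factorAt x i n

theorem apply_add_eq_of_not_rightSpecial (hij : factorAt x i m = factorAt x j m)
    (hi : ¬ RightSpecial (factorSet x) (factorAt x i m)) : x (i + m) = x (j + m) := by
  by_contra hne
  refine hi ⟨factorAt_mem_factorSet x i m, _, _, hne, ?_, ?_⟩
  · rw [← factorAt_succ]
    exact factorAt_mem_factorSet x i (m + 1)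
  · rw [hij, ← factorAt_succ]
    exact factorAt_mem_factorSet x j (m + 1)

theorem deterministicOff_rightSpecial (x : ι → A) (m : ℕ) :
    DeterministicOff (fun i => factorAt x i m) {u | RightSpecial (factorSet x) u} := by
  intro i j hij hi
  have h : factorAt x i (m + 1) = factorAt x j (m + 1) := by
    rw [factorAt_succ, factorAt_succ, apply_add_eq_of_not_rightSpecial hij hi]
    exact congrArg (· ++ [x (j + m)]) hij
  rw [factorAt_succ', factorAt_succ'] at h
  exact List.tail_eq_of_cons_eq h

/-- No right tail of `x` is ultimately periodic. For two-sided words this is aperiodicity to the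
right, which is stronger than the failure of `EventuallyPeriodicZ`. -/
def RightAperiodic (x : ι → A) : Prop := ∀ i, ¬ UltimatelyPeriodic fun k : ℕ => x (i + k)

namespace RightAperiodic

theorem exists_rightSpecial [Finite A] (hx : RightAperiodic x) (m : ℕ) (i : ι) :
    ∃ k : ℕ, RightSpecial (factorSet x) (factorAt x (i + k) m) := by
  by_contra! hi
  obtain ⟨N, p, hp, hper⟩ := (deterministicOff_rightSpecial x m).ultimatelyPeriodic
    (finite_range_factorAt x m) hi
  refine hx (i + m) ⟨N, p, hp, fun n hn => ?_⟩
  simpa only [add_assoc, ← Nat.cast_add, add_comm m] using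
    apply_add_eq_of_not_rightSpecial (hper n hn) (hi (n + p))

theorem exists_markers_of_length [Finite A] (hx : RightAperiodic x) {n : ℕ} (hn : 1 ≤ n) :
    ∃ M : Set (List A), (∀ v ∈ M, v.length = n) ∧
      n * M.ncard ≤ complexity (factorSet x) (4 * n) ∧
      ∀ i, ∃ k < 2 * n, factorAt x (i + k) n ∈ M := by
  have hext : ∀ u ∈ factorSet x, ∃ a, u ++ [a] ∈ factorSet x := fun _ =>
    exists_append_singleton_mem_factorSet
  obtain ⟨m, hnm, hmn, hRcard⟩ :=
    exists_mul_complexity_rightSpecial_le hext (2 * n) (show 0 < 2 * n by omega)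
  obtain ⟨S, hS, hScard, hit⟩ := (deterministicOff_rightSpecial x m).exists_hitting_set
    (hx.exists_rightSpecial m) (finite_range_factorAt x m) (show 0 < 2 * n by omega)
  rw [← two_mul, ← mul_assoc] at hmn hRcard
  let R : Set (List A) := {u ∈ {u | RightSpecial (factorSet x) u} | u.length = m}
  have length_eq : ∀ u ∈ R ∪ S, u.length = m := by
    rintro u (⟨-, hu⟩ | hu)
    · exact hu
    · obtain ⟨i, rfl⟩ := hS hu
      exact length_factorAt x i m
  have hScard' : 2 * n * S.ncard ≤ complexity (factorSet x) (4 * n) := by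
    rw [← complexity_factorSet] at hScard
    exact hScard.trans (complexity_monotone hext hmn.le)
  refine ⟨List.take n '' (R ∪ S), ?_, ?_, fun i => ?_⟩
  · rintro _ ⟨u, hu, rfl⟩
    rw [List.length_take, length_eq u hu]
    omega
  · have hcard : (List.take n '' (R ∪ S)).ncard ≤ R.ncard + S.ncard :=
      (Set.ncard_image_le ((List.finite_length_eq A m).subset length_eq)).trans
        (Set.ncard_union_le R S)
    have hRcard' : 2 * n * R.ncard ≤ complexity (factorSet x) (4 * n) := hRcard
    linarith [Nat.mul_le_mul_left (2 * n) hcard]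
  · obtain ⟨k, hk, hmem⟩ := hit i
    refine ⟨k, hk, factorAt x (i + k) m, ?_, take_factorAt x _ (by omega)⟩
    exact hmem.imp_left fun h => ⟨h, length_factorAt x _ m⟩

end RightAperiodic

end Factors

section Markers

/-- The language `F` has a `3`-marker set `M` of complexity `p_M(n) ≤ p_F(4n) / n`. -/
def HasSparseMarkerSet (F : Set (List A)) : Prop :=
  ∃ M : Set (List A), MarkerSet 3 M F ∧
    ∀ n : ℕ, 1 ≤ n → (complexity M n : ℝ) ≤ (complexity F (4 * n) : ℝ) / n

theorem RightAperiodic.hasSparseMarkerSet [Finite A] {ι : Type*} [AddMonoidWithOne ι] {x : ι → A}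
    (hx : RightAperiodic x) : HasSparseMarkerSet (factorSet x) := by
  choose! M length_eq hcard hit using fun n hn => hx.exists_markers_of_length (n := n) hn
  refine ⟨{v | v ∈ M v.length}, ?_, fun n hn => ?_⟩
  · rintro n hn _ ⟨i, l, rfl⟩ hl
    rw [length_factorAt] at hl
    obtain ⟨k, hk, hmem⟩ := hit n hn i
    refine ⟨factorAt x (i + k) n, ?_, length_factorAt x _ n, factorAt_infix x i (by omega)⟩
    rwa [Set.mem_ofPred_eq, length_factorAt]
  · have setOf_length_eq : {v ∈ {v | v ∈ M v.length} | v.length = n} = M n := by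
      ext v
      constructor
      · rintro ⟨hv, rfl⟩
        exact hv
      · intro hv
        obtain rfl := length_eq n hn v hv
        exact ⟨hv, rfl⟩
    rw [complexity, setOf_length_eq, le_div_iff₀' (by exact_mod_cast hn)]
    exact_mod_cast hcard n hn

theorem MarkerSet.preimage_reverse {D : ℕ} {M F : Set (List A)} (h : MarkerSet D M F) :
    MarkerSet D (List.reverse ⁻¹' M) (List.reverse ⁻¹' F) := by
  intro n hn u hu hlen
  obtain ⟨v, hv, rfl, hvu⟩ := h n hn u.reverse hu (by rwa [List.length_reverse])
  refine ⟨v.reverse, ?_, List.length_reverse, List.reverse_infix.1 ?_⟩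
  · rwa [Set.mem_preimage, List.reverse_reverse]
  · rwa [List.reverse_reverse]

theorem complexity_preimage_reverse (L : Set (List A)) (n : ℕ) :
    complexity (List.reverse ⁻¹' L) n = complexity L n := by
  have sep_preimage : {u ∈ List.reverse ⁻¹' L | u.length = n} =
      List.reverse ⁻¹' {u ∈ L | u.length = n} := by
    ext u
    simp
  rw [complexity, sep_preimage, Set.ncard_preimage_of_injective_subset_range List.reverse_injective
    (by simp [List.reverse_surjective.range_eq]), complexity]

theorem HasSparseMarkerSet.preimage_reverse {F : Set (List A)} (h : HasSparseMarkerSet F) :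
    HasSparseMarkerSet (List.reverse ⁻¹' F) := by
  obtain ⟨M, hM, hcard⟩ := h
  refine ⟨List.reverse ⁻¹' M, hM.preimage_reverse, fun n hn => ?_⟩
  simpa only [complexity_preimage_reverse] using hcard n hn

end Markers

section OneAndTwoSided

theorem reverse_factorAt (x : ℤ → A) (i : ℤ) (n : ℕ) :
    (factorAt x i n).reverse = factorAt (fun k => x (-k)) (1 - n - i) n := by
  refine List.ext_getElem (by simp) fun k hk _ => ?_
  simp only [List.length_reverse, length_factorAt] at hk
  simp only [factorAt, List.getElem_reverse, List.getElem_map, List.getElem_range,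
    List.length_map, List.length_range]
  congr 1
  omega

theorem factorSet_comp_neg (x : ℤ → A) :
    factorSet (fun k => x (-k)) = List.reverse ⁻¹' factorSet x := by
  have reverse_mem (y : ℤ → A) {u : List A} (hu : u ∈ factorSet y) :
      u.reverse ∈ factorSet fun k => y (-k) := by
    obtain ⟨i, n, rfl⟩ := hu
    exact ⟨_, n, reverse_factorAt y i n⟩
  ext u
  constructor <;> intro hu
  · simpa only [Set.mem_preimage, neg_neg] using reverse_mem (fun k => x (-k)) hu
  · simpa only [List.reverse_reverse] using reverse_mem _ hu

theorem rightAperiodic_of_not_ultimatelyPeriodic {x : ℕ → A} (hx : ¬ UltimatelyPeriodic x) :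
    RightAperiodic x := by
  rintro i ⟨N, p, hp, hper⟩
  refine hx ⟨i + N, p, hp, fun n hn => ?_⟩
  obtain ⟨k, rfl⟩ := Nat.exists_eq_add_of_le hn
  simpa only [Nat.cast_id, add_assoc] using hper (N + k) (Nat.le_add_right N k)

theorem exists_period_of_not_rightAperiodic {x : ℤ → A} (hx : ¬ RightAperiodic x) :
    ∃ p : ℕ, 0 < p ∧ ∃ N : ℤ, ∀ n : ℤ, N ≤ n → x (n + p) = x n := by
  simp only [RightAperiodic, not_forall, not_not] at hx
  obtain ⟨i, N, p, hp, hper⟩ := hx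
  refine ⟨p, hp, i + N, fun n hn => ?_⟩
  obtain ⟨k, rfl⟩ := Int.le.dest hn
  simpa only [Nat.cast_add, add_assoc] using hper (N + k) (Nat.le_add_right N k)

theorem rightAperiodic_or_rightAperiodic_comp_neg {x : ℤ → A} (hx : ¬ EventuallyPeriodicZ x) :
    RightAperiodic x ∨ RightAperiodic fun k => x (-k) := by
  by_contra! h
  obtain ⟨p, hp, N, hper⟩ := exists_period_of_not_rightAperiodic h.2
  refine hx ⟨exists_period_of_not_rightAperiodic h.1, p, hp, -N, fun n hn => ?_⟩
  simpa only [neg_add_rev, neg_neg, neg_sub, neg_add_eq_sub] using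
    hper (-n) (le_neg_of_le_neg hn)

end OneAndTwoSided

/-- every aperiodic (one-sided or two-sided) word `x` admits a
`3`-marker set `M` with `p_M(n) ≤ p_x(4n)/n` for every `n ≥ 1`. -/
theorem stmt11 (A : Type u) [Fintype A] [Nonempty A] :
    (∀ x : ℕ → A, ¬ UltimatelyPeriodic x →
      ∃ M : Set (List A), MarkerSet 3 M (Fac x) ∧
        ∀ n : ℕ, 1 ≤ n →
          (complexity M n : ℝ) ≤ (complexity (Fac x) (4 * n) : ℝ) / n) ∧
    (∀ x : ℤ → A, ¬ EventuallyPeriodicZ x →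
      ∃ M : Set (List A), MarkerSet 3 M (FacZ x) ∧
        ∀ n : ℕ, 1 ≤ n →
          (complexity M n : ℝ) ≤ (complexity (FacZ x) (4 * n) : ℝ) / n) := by
  refine ⟨fun x hx => ?_, fun x hx => ?_⟩
  · change HasSparseMarkerSet (Fac x)
    rw [Fac_eq_factorSet]
    exact (rightAperiodic_of_not_ultimatelyPeriodic hx).hasSparseMarkerSet
  · change HasSparseMarkerSet (FacZ x)
    rw [FacZ_eq_factorSet]
    obtain hright | hleft := rightAperiodic_or_rightAperiodic_comp_neg hx
    · exact hright.hasSparseMarkerSet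
    · have h := hleft.hasSparseMarkerSet.preimage_reverse
      rwa [← factorSet_comp_neg, funext fun k => congrArg x (neg_neg k)] at h
end
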